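/- For every real number β with 0 < β < 1 there exists a constant C > 0, depending only on n, p, α, β, C₁ and C₂, with the following property: if u is a nonnegative C¹ solution of div A(x,Du) + b(x)|Du|^α ≥ q(x)g(u) in ℝⁿ and 0 < r₁ < r₂ are real numbers such that M(r₂;u) > M(r₁;u) ≥ β·M(r₂;u) and (M(r₂;u) − M(r₁;u))^{α−p+1}·(r₂ − r₁)^{p−α}·ess sup_{r₁<|x|<r₂} b(x) ≤ C₁/4, then (M(r₂;u) − M(r₁;u))^{p−1} ≥ C·(r₂ − r₁)^p·(ess inf_{r₁<|x|<r₂} q(x))·inf_{t∈(β·M(r₁;u), M(r₂;u))} g(t). -/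

import Mathlib

open MeasureTheory Metric Set Filter
open scoped RealInnerProductSpace ENNReal

noncomputable section

abbrev Euc (n : ℕ) := EuclideanSpace ℝ (Fin n)

/-- Weak solution of `div A(x,Dv) + b(x)|Dv|^α ≥ a(x)` on an open set `U`:
for every nonnegative test function `φ ∈ C₀^∞(U)`,
`-∫ A(x,Dv)·Dφ + ∫ b |Dv|^α φ ≥ ∫ a φ`. -/
def IsWeakSol {n : ℕ} (A : Euc n → Euc n → Euc n) (b : Euc n → ℝ) (α : ℝ)
    (a : Euc n → ℝ) (U : Set (Euc n)) (v : Euc n → ℝ) : Prop :=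
  ∀ φ : Euc n → ℝ, ContDiff ℝ (⊤ : ℕ∞) φ → HasCompactSupport φ → tsupport φ ⊆ U →
    (∀ x, 0 ≤ φ x) →
    (∫ x in U, a x * φ x) ≤
      (-(∫ x in U, ⟪A x (gradient v x), gradient φ x⟫)) +
        ∫ x in U, b x * ‖gradient v x‖ ^ α * φ x

/-- Structural conditions on `A`: measurability, coercivity and growth. -/
def StructCond {n : ℕ} (A : Euc n → Euc n → Euc n) (p C₁ C₂ : ℝ) : Prop :=
  Measurable (Function.uncurry A) ∧
    ∀ x ζ : Euc n, C₁ * ‖ζ‖ ^ p ≤ ⟪ζ, A x ζ⟫ ∧ ‖A x ζ‖ ≤ C₂ * ‖ζ‖ ^ (p - 1)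

/-- Locally bounded function on `ℝⁿ`. -/
def LocBdd {n : ℕ} (b : Euc n → ℝ) : Prop :=
  ∀ K : Set (Euc n), IsCompact K → ∃ C, ∀ x ∈ K, b x ≤ C

/-- `M(r; u) = max_{|x| = r} u x`. -/
def sphMax {n : ℕ} (u : Euc n → ℝ) (r : ℝ) : ℝ := sSup (u '' Metric.sphere (0 : Euc n) r)

/-- `g_θ(t) = inf_{s ∈ (t/θ, θ t)} g s`. -/
def ginf (g : ℝ → ℝ) (θ t : ℝ) : ℝ := sInf (g '' Set.Ioo (t / θ) (θ * t))

/-- The open annulus `{x : r₁ < |x| < r₂}`. -/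
def Ann (n : ℕ) (r₁ r₂ : ℝ) : Set (Euc n) := {x : Euc n | r₁ < ‖x‖ ∧ ‖x‖ < r₂}

/-- `q_σ(r) = ess inf_{r/σ < |x| < σ r} q x`. -/
def qinf {n : ℕ} (q : Euc n → ℝ) (σ r : ℝ) : ℝ :=
  essInf q (volume.restrict (Ann n (r / σ) (σ * r)))

/-- `f_σ(r) = q_σ(r) / (1 + r q_σ(r)^{(α-p+1)/α} ess sup_{r/σ<|x|<σr} b^{(p-1)/α})`. -/
def fdef {n : ℕ} (q b : Euc n → ℝ) (p α σ r : ℝ) : ℝ :=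
  qinf q σ r /
    (1 + r * qinf q σ r ^ ((α - p + 1) / α) *
      essSup (fun x => b x ^ ((p - 1) / α)) (volume.restrict (Ann n (r / σ) (σ * r))))


theorem degiorgi_seq {n : ℕ} (hn : 2 ≤ n) (μ : ℝ → ℝ) (hμ0 : ∀ k, 0 ≤ μ k)
    (hμ : Antitone μ) {k₀ d Λ : ℝ} (hd : 0 < d) (hΛ : 0 < Λ)
    (h : ∀ k l, k₀ ≤ k → k < l → ((l - k) ^ 2) ^ n * μ l ^ (n - 1) ≤ (Λ * μ k) ^ n)
    (h0 : μ k₀ ≤ (d ^ 2 * (1 / 4) ^ n / Λ) ^ n) : μ (k₀ + d) = 0 := by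
  obtain ⟨m, rfl⟩ : ∃ m, n = m + 1 := ⟨n - 1, by omega⟩
  have hm : m ≠ 0 := by omega
  simp only [Nat.add_sub_cancel] at h
  set θ : ℝ := (1 / 4) ^ (m + 1) with hθ
  have hθ0 : 0 < θ := by positivity
  have hθ1 : θ < 1 := pow_lt_one₀ (by norm_num) (by norm_num) (by omega)
  set Y : ℝ := (d ^ 2 * θ / Λ) ^ (m + 1) with hY
  have hY0 : 0 < Y := by positivity
  have key : ∀ j : ℕ, μ (k₀ + d * (1 - (1 / 2) ^ j)) ≤ Y * θ ^ j := by
    intro j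
    induction j with
    | zero => simpa using h0
    | succ j ih =>
      have hj : (0 : ℝ) < (1 / 2) ^ j := by positivity
      have hj1 : ((1 : ℝ) / 2) ^ j ≤ 1 := pow_le_one₀ (by norm_num) (by norm_num)
      have h1 := h (k₀ + d * (1 - (1 / 2) ^ j)) (k₀ + d * (1 - (1 / 2) ^ (j + 1)))
        (by nlinarith) (by rw [pow_succ]; nlinarith)
      have e1 : (k₀ + d * (1 - (1 / 2) ^ (j + 1))) - (k₀ + d * (1 - (1 / 2) ^ j))
          = d * (1 / 2) ^ (j + 1) := by ring
      rw [e1] at h1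
      have e2 : ((d * (1 / 2 : ℝ) ^ (j + 1)) ^ 2) ^ (m + 1) = (d ^ 2) ^ (m + 1) * θ ^ (j + 1) := by
        rw [hθ, mul_pow, mul_pow, ← pow_mul, ← pow_mul, ← pow_mul, ← pow_mul]
        congr 1
        rw [show (1 / 4 : ℝ) = (1 / 2) ^ 2 by norm_num, ← pow_mul]
        congr 1; ring
      rw [e2] at h1
      have h2 : (Λ * μ (k₀ + d * (1 - (1 / 2) ^ j))) ^ (m + 1) ≤ (Λ * (Y * θ ^ j)) ^ (m + 1) := by
        have := hμ0 (k₀ + d * (1 - (1 / 2) ^ j))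
        gcongr
      have e3 : (Λ * (Y * θ ^ j)) ^ (m + 1)
          = ((d ^ 2) ^ (m + 1) * θ ^ (j + 1)) * (Y * θ ^ (j + 1)) ^ m := by
        have : Λ ^ (m + 1) * Y = (d ^ 2) ^ (m + 1) * θ ^ (m + 1) := by
          rw [hY, ← mul_pow, ← mul_pow]; congr 1; field_simp
        calc (Λ * (Y * θ ^ j)) ^ (m + 1) = (Λ ^ (m + 1) * Y) * Y ^ m * θ ^ (j * (m + 1)) := by
              rw [mul_pow, mul_pow, ← pow_mul]; ring
          _ = _ := by
            rw [this, mul_pow, ← pow_mul]; ring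
      have h3 := h1.trans (h2.trans_eq e3)
      have h4 := le_of_mul_le_mul_left h3 (by positivity)
      exact le_of_pow_le_pow_left₀ hm (by positivity) h4
  have hlim : Tendsto (fun j : ℕ => Y * θ ^ j) atTop (nhds 0) := by
    simpa using (tendsto_pow_atTop_nhds_zero_of_lt_one hθ0.le hθ1).const_mul Y
  apply le_antisymm _ (hμ0 _)
  refine ge_of_tendsto' hlim fun j => le_trans (hμ ?_) (key j)
  have hj : (0 : ℝ) < (1 / 2) ^ j := by positivity
  nlinarith

theorem hasDerivAt_possq (t : ℝ) :
    HasDerivAt (fun t : ℝ => (max t 0) ^ 2) (2 * max t 0) t := by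
  rcases lt_trichotomy t 0 with ht | ht | ht
  · rw [max_eq_right ht.le, mul_zero]
    refine (hasDerivAt_const t (0 : ℝ)).congr_of_eventuallyEq ?_
    filter_upwards [Iio_mem_nhds ht] with s hs
    rw [max_eq_right (le_of_lt hs)]; norm_num
  · subst ht
    rw [max_self, mul_zero, hasDerivAt_iff_isLittleO_nhds_zero]
    have : (fun h : ℝ => h ^ 2) =o[nhds 0] (fun h : ℝ => h) := by
      simpa using (Asymptotics.isLittleO_pow_pow (𝕜 := ℝ) (m := 1) (n := 2) (by norm_num))
    refine Asymptotics.IsBigO.trans_isLittleO ?_ this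
    refine Asymptotics.IsBigO.of_bound 1 (Eventually.of_forall fun h => ?_)
    rcases le_total h 0 with hh | hh
    · simp [max_eq_right hh]; positivity
    · simp [max_eq_left hh]
  · rw [max_eq_left ht.le]
    have := (hasDerivAt_pow 2 t)
    simp at this
    refine this.congr_of_eventuallyEq ?_
    filter_upwards [Ioi_mem_nhds ht] with s hs
    rw [max_eq_left (le_of_lt hs)]

theorem contDiff_possq : ContDiff ℝ 1 (fun t : ℝ => (max t 0) ^ 2) := by
  rw [contDiff_one_iff_deriv]
  refine ⟨fun t => (hasDerivAt_possq t).differentiableAt, ?_⟩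
  have : deriv (fun t : ℝ => (max t 0) ^ 2) = fun t => 2 * max t 0 := by
    ext t; exact (hasDerivAt_possq t).deriv
  rw [this]; fun_prop

/-- truncated test function -/
def testf {n : ℕ} (v : Euc n → ℝ) (z : Euc n) (R k : ℝ) : Euc n → ℝ :=
  (ball z R).indicator fun x => (max (v x - k) 0) ^ 2

theorem testf_nonneg {n : ℕ} (v : Euc n → ℝ) (z : Euc n) (R k : ℝ) (x : Euc n) :
    0 ≤ testf v z R k x := by
  unfold testf; apply indicator_nonneg; intro x _; positivity

theorem testf_compact {n : ℕ} (v : Euc n → ℝ) (z : Euc n) (R k : ℝ) :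
    HasCompactSupport (testf v z R k) := by
  refine HasCompactSupport.of_support_subset_isCompact (isCompact_closedBall z R) ?_
  exact (support_indicator_subset).trans ball_subset_closedBall

theorem testf_eventually {n : ℕ} {v : Euc n → ℝ} (hv : Continuous v) {z : Euc n} {R k : ℝ}
    (hs : ∀ x ∈ sphere z R, v x < k) (x : Euc n) :
    (x ∈ ball z R ∧ testf v z R k =ᶠ[nhds x] fun x => (max (v x - k) 0) ^ 2) ∨
    (x ∉ ball z R ∧ testf v z R k =ᶠ[nhds x] fun _ => 0) := by
  rcases lt_trichotomy (dist x z) R with h | h | h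
  · left
    refine ⟨h, ?_⟩
    filter_upwards [isOpen_ball.mem_nhds (show x ∈ ball z R from h)] with y hy
    simp [testf, indicator_of_mem hy]
  · right
    refine ⟨by simp [h], ?_⟩
    have : v x < k := hs x h
    filter_upwards [hv.continuousAt.eventually (Iio_mem_nhds this)] with y hy
    unfold testf
    by_cases hyb : y ∈ ball z R
    · have : v y < k := hy
      rw [indicator_of_mem hyb, max_eq_right (by linarith)]; norm_num
    · rw [indicator_of_notMem hyb]
  · right
    refine ⟨by simp [h.le], ?_⟩
    have : x ∈ (closedBall z R)ᶜ := by simp [h]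
    filter_upwards [isClosed_closedBall.isOpen_compl.mem_nhds this] with y hy
    exact indicator_of_notMem (fun hh => hy (ball_subset_closedBall hh)) _

theorem testf_contDiff {n : ℕ} {v : Euc n → ℝ} (hv : ContDiff ℝ 1 v) {z : Euc n} {R k : ℝ}
    (hs : ∀ x ∈ sphere z R, v x < k) : ContDiff ℝ 1 (testf v z R k) := by
  rw [contDiff_iff_contDiffAt]
  intro x
  rcases testf_eventually hv.continuous hs x with ⟨_, h⟩ | ⟨_, h⟩
  · refine ContDiffAt.congr_of_eventuallyEq ?_ h
    exact (contDiff_possq.comp (hv.sub contDiff_const)).contDiffAt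
  · exact contDiffAt_const.congr_of_eventuallyEq h

theorem testf_fderiv {n : ℕ} {v : Euc n → ℝ} (hv : ContDiff ℝ 1 v) {z : Euc n} {R k : ℝ}
    (hs : ∀ x ∈ sphere z R, v x < k) (x : Euc n) :
    fderiv ℝ (testf v z R k) x =
      (ball z R).indicator (fun x => (2 * max (v x - k) 0) • fderiv ℝ v x) x := by
  rcases testf_eventually hv.continuous hs x with ⟨hx, h⟩ | ⟨hx, h⟩
  · rw [indicator_of_mem hx, h.fderiv_eq]
    have h1 : HasFDerivAt (fun x => v x - k) (fderiv ℝ v x) x :=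
      ((hv.differentiable (by norm_num)) x).hasFDerivAt.sub_const k
    exact ((hasDerivAt_possq (v x - k)).comp_hasFDerivAt x h1).fderiv
  · rw [indicator_of_notMem hx, h.fderiv_eq]; simp

theorem integrable_of_bdd_supp {n : ℕ} {f : Euc n → ℝ} (hf : Measurable f) (z : Euc n) {R C : ℝ}
    (hb : ∀ x ∈ closedBall z R, ‖f x‖ ≤ C) (hs : ∀ x, x ∉ closedBall z R → f x = 0) :
    Integrable f := by
  have h1 : IntegrableOn f (closedBall z R) :=
    Measure.integrableOn_of_bounded (M := C) measure_closedBall_lt_top.ne hf.aestronglyMeasurable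
      ((ae_restrict_iff' measurableSet_closedBall).2 (Eventually.of_forall hb))
  refine (integrableOn_iff_integrable_of_support_subset ?_).1 h1
  intro x hx
  by_contra h
  exact hx (hs x h)

theorem mollify {n : ℕ} {φ : Euc n → ℝ} (hφ : ContDiff ℝ 1 φ) (hc : HasCompactSupport φ)
    (h0 : ∀ x, 0 ≤ φ x) {R : ℝ} (hR : ∀ x, x ∉ closedBall (0 : Euc n) R → φ x = 0)
    {ε : ℝ} (hε : 0 < ε) :
    ∃ ψ : Euc n → ℝ, ContDiff ℝ (⊤ : ℕ∞) ψ ∧ HasCompactSupport ψ ∧ (∀ x, 0 ≤ ψ x) ∧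
      (∀ x, x ∉ closedBall (0 : Euc n) (R + 1) → ψ x = 0) ∧ (∀ x, |ψ x - φ x| ≤ ε) ∧
      (∀ x, ‖fderiv ℝ ψ x - fderiv ℝ φ x‖ ≤ ε) := by
  have hcont := hφ.continuous
  have hcont' : Continuous (fderiv ℝ φ) := hφ.continuous_fderiv (by norm_num)
  obtain ⟨δ₁, hδ₁, H₁⟩ := Metric.uniformContinuous_iff.1
    (hc.uniformContinuous_of_continuous hcont) ε hε
  obtain ⟨δ₂, hδ₂, H₂⟩ := Metric.uniformContinuous_iff.1
    ((hc.fderiv ℝ).uniformContinuous_of_continuous hcont') ε hε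
  set δ := min 1 (min δ₁ δ₂) with hδ
  have hδ0 : 0 < δ := by positivity
  let B : ContDiffBump (0 : Euc n) := ⟨δ / 2, δ, by positivity, by linarith⟩
  let ψ : Euc n → ℝ := convolution (B.normed volume) φ (ContinuousLinearMap.lsmul ℝ ℝ) volume
  have hderiv : ∀ x, HasFDerivAt ψ
      (convolution (B.normed volume) (fderiv ℝ φ)
        (ContinuousLinearMap.precompR (Euc n) (ContinuousLinearMap.lsmul ℝ ℝ)) volume x) x :=
    fun x => hc.hasFDerivAt_convolution_right _
      (B.continuous_normed.locallyIntegrable) hφ x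
  have hconv : ∀ x, (convolution (B.normed volume) (fderiv ℝ φ)
        (ContinuousLinearMap.precompR (Euc n) (ContinuousLinearMap.lsmul ℝ ℝ)) volume x)
      = convolution (B.normed volume) (fderiv ℝ φ) (ContinuousLinearMap.lsmul ℝ ℝ) volume x := by
    intro x
    unfold convolution
    congr 1
  have hsupp : ∀ x, x ∉ closedBall (0 : Euc n) (R + 1) → ψ x = 0 := by
    intro x hx
    by_contra hne
    have := support_convolution_subset (ContinuousLinearMap.lsmul ℝ ℝ) (show x ∈ Function.support ψ from hne)
    rw [B.support_normed_eq] at this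
    obtain ⟨y, hy, w, hw, rfl⟩ := this
    apply hx
    have hw' : w ∈ closedBall (0 : Euc n) R := by
      by_contra hh; exact hw (hR w hh)
    have hy' : ‖y‖ < δ := by simpa using hy
    simp only [mem_closedBall, dist_zero_right] at hw' ⊢
    have : δ ≤ 1 := min_le_left _ _
    exact (norm_add_le _ _).trans (by linarith)
  refine ⟨ψ, ?_, ?_, ?_, hsupp, ?_, ?_⟩
  · exact B.hasCompactSupport_normed.contDiff_convolution_left _ B.contDiff_normed
      hcont.locallyIntegrable
  · exact HasCompactSupport.intro (isCompact_closedBall (0 : Euc n) (R + 1)) hsupp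
  · intro x
    refine integral_nonneg fun t => ?_
    simp only [ContinuousLinearMap.lsmul_apply, smul_eq_mul]
    exact mul_nonneg (B.nonneg_normed _) (h0 _)
  · intro x
    have := B.dist_normed_convolution_le (μ := volume) (g := φ) (x₀ := x) (ε := ε)
      hcont.aestronglyMeasurable (fun y hy => (H₁ (lt_of_lt_of_le (mem_ball.1 hy) 
        ((min_le_right _ _).trans (min_le_left _ _)))).le)
    rwa [Real.dist_eq] at this
  · intro x
    have := B.dist_normed_convolution_le (μ := volume) (g := fderiv ℝ φ) (x₀ := x) (ε := ε)
      hcont'.aestronglyMeasurable (fun y hy => (H₂ (lt_of_lt_of_le (mem_ball.1 hy) 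
        ((min_le_right _ _).trans (min_le_right _ _)))).le)
    rw [(hderiv x).fderiv, hconv x, ← dist_eq_norm]
    exact this

/-- extension of the class of test functions to C¹ -/
theorem weak_C1 {n : ℕ} {V : Euc n → Euc n} {a e : Euc n → ℝ} (hV : Measurable V)
    (ha : Measurable a) (he : Measurable e)
    (bV : ∀ R : ℝ, ∃ C, ∀ x ∈ closedBall (0 : Euc n) R, ‖V x‖ ≤ C)
    (ba : ∀ R : ℝ, ∃ C, ∀ x ∈ closedBall (0 : Euc n) R, |a x| ≤ C)
    (be : ∀ R : ℝ, ∃ C, ∀ x ∈ closedBall (0 : Euc n) R, |e x| ≤ C)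
    (H : ∀ φ : Euc n → ℝ, ContDiff ℝ (⊤ : ℕ∞) φ → HasCompactSupport φ → (∀ x, 0 ≤ φ x) →
      (∫ x, a x * φ x) ≤ (-(∫ x, ⟪V x, gradient φ x⟫)) + ∫ x, e x * φ x)
    {φ : Euc n → ℝ} (hφ : ContDiff ℝ 1 φ) (hc : HasCompactSupport φ)
    (h0 : ∀ x, 0 ≤ φ x) :
    Integrable (fun x => a x * φ x + fderiv ℝ φ x (V x) - e x * φ x) ∧
    ∫ x, (a x * φ x + fderiv ℝ φ x (V x) - e x * φ x) ≤ 0 := by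
  obtain ⟨R, hR⟩ : ∃ R, ∀ x, x ∉ closedBall (0 : Euc n) R → φ x = 0 := by
    obtain ⟨R, hR⟩ := hc.isCompact.isBounded.subset_closedBall (0 : Euc n)
    exact ⟨R, fun x hx => by
      by_contra h; exact hx (hR (subset_tsupport _ h))⟩
  obtain ⟨CV, hCV⟩ := bV (R + 1)
  obtain ⟨Ca, hCa⟩ := ba (R + 1)
  obtain ⟨Ce, hCe⟩ := be (R + 1)
  set U := closedBall (0 : Euc n) (R + 1) with hU
  -- integrability of the three pieces
  have int : ∀ ψ : Euc n → ℝ, ContDiff ℝ 1 ψ → HasCompactSupport ψ → (∀ x, x ∉ U → ψ x = 0) →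
      Integrable (fun x => a x * ψ x) ∧ Integrable (fun x => fderiv ℝ ψ x (V x)) ∧
      Integrable (fun x => e x * ψ x) := by
    intro ψ hψ hcψ hψ0
    have hcont := hψ.continuous
    have hcont' : Continuous (fderiv ℝ ψ) := hψ.continuous_fderiv (by norm_num)
    obtain ⟨B₁, hB₁⟩ := hcψ.exists_bound_of_continuous hcont
    obtain ⟨B₂, hB₂⟩ := (hcψ.fderiv ℝ).exists_bound_of_continuous hcont'
    have hUc : ∀ x, x ∉ U → fderiv ℝ ψ x = 0 := by
      intro x hx
      have : ψ =ᶠ[nhds x] fun _ => 0 := by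
        filter_upwards [isClosed_closedBall.isOpen_compl.mem_nhds hx] with y hy
        exact hψ0 y hy
      rw [this.fderiv_eq]; simp
    refine ⟨integrable_of_bdd_supp (ha.mul hcont.measurable) 0 (R := R + 1) (C := Ca * B₁) ?_ ?_,
      integrable_of_bdd_supp ?_ 0 (R := R + 1) (C := B₂ * CV) ?_ ?_,
      integrable_of_bdd_supp (he.mul hcont.measurable) 0 (R := R + 1) (C := Ce * B₁) ?_ ?_⟩
    · intro x hx
      rw [norm_mul]
      exact mul_le_mul (hCa x hx) (hB₁ x) (norm_nonneg _) ((abs_nonneg _).trans (hCa x hx))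
    · intro x hx; simp [hψ0 x hx]
    · have : (fun x => fderiv ℝ ψ x (V x)) = fun x => ⟪gradient ψ x, V x⟫ := by
        ext x; rw [inner_gradient_left]
      rw [this]
      have hg : Continuous (gradient ψ) := by
        unfold gradient; exact (LinearIsometryEquiv.continuous _).comp hcont'
      exact hg.measurable.inner hV
    · intro x hx
      exact (ContinuousLinearMap.le_opNorm _ _).trans
        (mul_le_mul (hB₂ x) (hCV x hx) (norm_nonneg _) ((norm_nonneg _).trans (hB₂ x)))
    · intro x hx; simp [hUc x hx]
    · intro x hx
      rw [norm_mul]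
      exact mul_le_mul (hCe x hx) (hB₁ x) (norm_nonneg _) ((abs_nonneg _).trans (hCe x hx))
    · intro x hx; simp [hψ0 x hx]
  have hφU : ∀ x, x ∉ U → φ x = 0 := fun x hx => hR x fun h =>
    hx (closedBall_subset_closedBall (by linarith) h)
  obtain ⟨i1, i2, i3⟩ := int φ hφ hc hφU
  refine ⟨(i1.add i2).sub i3, ?_⟩
  -- epsilon argument
  by_contra hcon
  push Not at hcon
  set J := ∫ x, (a x * φ x + fderiv ℝ φ x (V x) - e x * φ x) with hJ
  set T := (|Ca| + |CV| + |Ce|) * (volume : Measure (Euc n)).real U with hT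
  have hT0 : 0 ≤ T := by positivity
  obtain ⟨ψ, hψ, hcψ, hψ0, hψs, hd, hd'⟩ := mollify hφ hc h0 hR (ε := J / (T + 1) / 2) (by positivity)
  set ε := J / (T + 1) / 2 with hε
  have hε0 : 0 < ε := by positivity
  obtain ⟨j1, j2, j3⟩ := int ψ (hψ.of_le (by exact_mod_cast le_top)) hcψ hψs
  have h1 := H ψ hψ hcψ hψ0
  have e1 : (∫ x, ⟪V x, gradient ψ x⟫) = ∫ x, fderiv ℝ ψ x (V x) := by
    congr 1; ext x; rw [real_inner_comm, inner_gradient_left]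
  rw [e1] at h1
  have h2 : ∫ x, (a x * ψ x + fderiv ℝ ψ x (V x) - e x * ψ x) ≤ 0 := by
    have t1 := integral_sub (j1.add j2) j3
    have t2 := integral_add j1 j2
    simp only [Pi.add_apply] at t1
    rw [t1, t2]; linarith
  have h3 : J - ∫ x, (a x * ψ x + fderiv ℝ ψ x (V x) - e x * ψ x) ≤ ε * T := by
    have t1 := integral_sub ((i1.add i2).sub i3) ((j1.add j2).sub j3)
    simp only [Pi.add_apply, Pi.sub_apply] at t1
    rw [hJ, ← t1]
    calc _ ≤ ∫ x, U.indicator (fun _ => ε * (|Ca| + |CV| + |Ce|)) x := by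
          refine integral_mono (((i1.add i2).sub i3).sub ((j1.add j2).sub j3)) ?_ ?_
          · exact (integrable_indicator_iff measurableSet_closedBall).2
              (integrableOn_const measure_closedBall_lt_top.ne)
          · intro x
            simp only
            by_cases hx : x ∈ U
            · rw [indicator_of_mem hx]
              have k1 : |a x * (ψ x - φ x)| ≤ |Ca| * ε := by
                rw [abs_mul]
                exact mul_le_mul ((hCa x hx).trans (le_abs_self _)) (hd x) (abs_nonneg _) (abs_nonneg _)
              have k2 : |e x * (ψ x - φ x)| ≤ |Ce| * ε := by
                rw [abs_mul]
                exact mul_le_mul ((hCe x hx).trans (le_abs_self _)) (hd x) (abs_nonneg _) (abs_nonneg _)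
              have k3 : |(fderiv ℝ ψ x - fderiv ℝ φ x) (V x)| ≤ ε * |CV| :=
                (ContinuousLinearMap.le_opNorm _ _).trans
                  (mul_le_mul (hd' x) ((hCV x hx).trans (le_abs_self _)) (norm_nonneg _) hε0.le)
              rw [sub_apply] at k3
              have := neg_le_of_abs_le k1
              have := le_of_abs_le k2
              have := neg_le_of_abs_le k3
              nlinarith
            · rw [indicator_of_notMem hx]
              have hz : ∀ χ : Euc n → ℝ, (∀ x, x ∉ U → χ x = 0) → fderiv ℝ χ x = 0 := by
                intro χ hχ
                have : χ =ᶠ[nhds x] fun _ => 0 := by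
                  filter_upwards [isClosed_closedBall.isOpen_compl.mem_nhds hx] with y hy
                  exact hχ y hy
                rw [this.fderiv_eq]; simp
              simp [hz φ hφU, hz ψ hψs, hφU x hx, hψs x hx]
      _ = ε * T := by
          rw [integral_indicator measurableSet_closedBall, setIntegral_const, hT, smul_eq_mul]; ring
  have h4 : ε * T ≤ J / 2 := by
    rw [hε]
    have : J / (T + 1) / 2 * T = J / 2 * (T / (T + 1)) := by field_simp
    rw [this]
    have : T / (T + 1) ≤ 1 := by rw [div_le_one (by positivity)]; linarith
    nlinarith
  linarith

/-- Sobolev inequality in measure form -/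
theorem sobolev_meas {n : ℕ} (hn : 2 ≤ n) : ∃ Cs : ℝ, 0 < Cs ∧
    ∀ (φ : Euc n → ℝ), ContDiff ℝ 1 φ → HasCompactSupport φ → ∀ (s : Set (Euc n)),
      volume s ≠ ∞ → ∀ t : ℝ, 0 ≤ t → (∀ x ∈ s, t ≤ φ x) → ∀ I : ℝ,
      (∫ x, ‖fderiv ℝ φ x‖) ≤ I → t ^ n * (volume.real s) ^ (n - 1) ≤ (Cs * I) ^ n := by
  obtain ⟨m, rfl⟩ : ∃ m, n = m + 1 := ⟨n - 1, by omega⟩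
  have hm : m ≠ 0 := by omega
  have hm' : (m : ℝ) ≠ 0 := by exact_mod_cast hm
  set σ : ℝ := ((m + 1 : ℕ) : ℝ) / m with hσ
  have hσ0 : 0 < σ := by positivity
  have hconj : (Module.finrank ℝ (Euc (m + 1)) : ℝ).HolderConjugate σ := by
    rw [finrank_euclideanSpace_fin, Real.holderConjugate_iff]
    refine ⟨by exact_mod_cast (by omega : 1 < m + 1), ?_⟩
    rw [hσ]; push_cast; field_simp; ring
  set C0 := lintegralPowLePowLIntegralFDerivConst (volume : Measure (Euc (m + 1))) σ with hC0
  set Cs : ℝ := max 1 (C0 : ℝ) with hCs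
  have hCs1 : 1 ≤ Cs := le_max_left _ _
  refine ⟨Cs, by positivity, ?_⟩
  intro φ hφ hc s hs t ht hst I hI
  have h1 := lintegral_pow_le_pow_lintegral_fderiv (volume : Measure (Euc (m + 1))) hφ hc hconj
  have hcont' : Continuous (fderiv ℝ φ) := hφ.continuous_fderiv (by norm_num)
  have hIntD : Integrable (fderiv ℝ φ) := hcont'.integrable_of_hasCompactSupport (hc.fderiv ℝ)
  have hI0 : 0 ≤ I := le_trans (integral_nonneg fun _ => norm_nonneg _) hI
  have e1 : ∫⁻ x, ‖fderiv ℝ φ x‖ₑ ≤ ENNReal.ofReal I := by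
    rw [← ofReal_integral_norm_eq_lintegral_enorm hIntD]
    exact ENNReal.ofReal_le_ofReal hI
  have e2 : ENNReal.ofReal t ^ σ * volume s ≤ ∫⁻ x, ‖φ x‖ₑ ^ σ := by
    have hmeas : Measurable fun x => ‖φ x‖ₑ ^ σ := by
      exact (hφ.continuous.measurable.enorm).pow_const _
    refine le_trans ?_ (mul_meas_ge_le_lintegral hmeas (ENNReal.ofReal t ^ σ))
    gcongr
    intro x hx
    simp only [mem_ofPred_eq]
    gcongr
    rw [Real.enorm_eq_ofReal_abs]
    exact ENNReal.ofReal_le_ofReal ((hst x hx).trans (le_abs_self _))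
  have e3 : ENNReal.ofReal t ^ σ * volume s ≤ (C0 : ℝ≥0∞) * ENNReal.ofReal I ^ σ := by
    refine e2.trans (h1.trans ?_)
    gcongr
  have e4 : t ^ σ * volume.real s ≤ C0 * I ^ σ := by
    have := ENNReal.toReal_mono (by
      exact ENNReal.mul_ne_top ENNReal.coe_ne_top (ENNReal.rpow_ne_top_of_nonneg hσ0.le ENNReal.ofReal_ne_top)) e3
    rw [ENNReal.toReal_mul, ENNReal.toReal_mul, ← ENNReal.toReal_rpow, ← ENNReal.toReal_rpow,
      ENNReal.toReal_ofReal ht, ENNReal.toReal_ofReal hI0] at this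
    exact this
  have e5 : t ^ σ * volume.real s ≤ Cs * I ^ σ := e4.trans (by gcongr; exact le_max_right _ _)
  have e6 := pow_le_pow_left₀ (by positivity) e5 m
  have pw : ∀ y : ℝ, 0 ≤ y → (y ^ σ) ^ m = y ^ (m + 1) := by
    intro y hy
    rw [← Real.rpow_natCast, ← Real.rpow_mul hy, hσ, div_mul_cancel₀ _ hm', Real.rpow_natCast]
  rw [mul_pow, mul_pow, pw t ht, pw I hI0] at e6
  simp only [Nat.add_sub_cancel]
  refine e6.trans ?_
  rw [mul_pow]
  gcongr
  omega

/-- energy estimate, abstract form -/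
theorem energy {n : ℕ} (hn : 2 ≤ n) : ∃ Cs : ℝ, 0 < Cs ∧
    ∀ (V : Euc n → Euc n) (a e : Euc n → ℝ), (∀ x, 0 ≤ a x) → (∀ x, 0 ≤ e x) →
    (∀ φ : Euc n → ℝ, ContDiff ℝ 1 φ → HasCompactSupport φ → (∀ x, 0 ≤ φ x) → 
      Integrable (fun x => a x * φ x + fderiv ℝ φ x (V x) - e x * φ x) ∧
      ∫ x, (a x * φ x + fderiv ℝ φ x (V x) - e x * φ x) ≤ 0) →
    ∀ (v : Euc n → ℝ), ContDiff ℝ 1 v → ∀ (z : Euc n) (R k₀ d K L : ℝ), 0 ≤ K → 0 ≤ L →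
    (∀ x ∈ sphere z R, v x < k₀) → (∀ x ∈ ball z R, v x ≤ k₀ + d) →
    ∀ (E : Euc n → ℝ) (S : Set (Euc n)), (∀ x, 0 ≤ E x) → MeasurableSet S →
    (∀ᵐ x, x ∈ ball z R → k₀ < v x →
      E x - S.indicator (fun _ => K) x ≤ 2 * fderiv ℝ v x (V x) - e x * d) →
    (∀ x, x ∈ ball z R → k₀ < v x →
      ‖fderiv ℝ v x‖ ≤ L * (E x + S.indicator (fun _ => K) x)) →
    ∀ k l, k₀ ≤ k → k < l →
      (∀ m, (∀ᵐ x, x ∈ ball z R → k₀ < v x → m ≤ a x) → 0 ≤ m →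
        m * (l - k) ^ 2 * volume.real (ball z R ∩ {x | l < v x}) ≤
          K * d * volume.real (ball z R ∩ {x | k < v x} ∩ S)) ∧
      ((l - k) ^ 2) ^ n * (volume.real (ball z R ∩ {x | l < v x})) ^ (n - 1) ≤ 
        (Cs * (4 * L * K * d) * volume.real (ball z R ∩ {x | k < v x} ∩ S)) ^ n := by
  obtain ⟨Cs, hCs, hsob⟩ := sobolev_meas hn
  refine ⟨Cs, hCs, ?_⟩
  intro V a e ha he HJ v hv z R k₀ d K L hK hL hsph hle E S hE hS hP hG k l hk hkl
  have hvc := hv.continuous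
  have hsk : ∀ x ∈ sphere z R, v x < k := fun x hx => (hsph x hx).trans_le hk
  set φ := testf v z R k with hφ
  have hφ1 : ContDiff ℝ 1 φ := testf_contDiff hv hsk
  have hφc : HasCompactSupport φ := testf_compact v z R k
  have hφ0 : ∀ x, 0 ≤ φ x := testf_nonneg v z R k
  obtain ⟨hFi, hF⟩ := HJ φ hφ1 hφc hφ0
  set F := fun x => a x * φ x + fderiv ℝ φ x (V x) - e x * φ x with hFdef
  set Ak := ball z R ∩ {x | k < v x} with hAk
  set Al := ball z R ∩ {x | l < v x} with hAl
  have mAk : MeasurableSet Ak := measurableSet_ball.inter (isOpen_lt continuous_const hvc).measurableSet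
  have mAl : MeasurableSet Al := measurableSet_ball.inter (isOpen_lt continuous_const hvc).measurableSet
  have fin : ∀ s : Set (Euc n), s ⊆ ball z R → volume s ≠ ∞ := fun s hs =>
    ((measure_mono hs).trans_lt measure_ball_lt_top).ne
  have mT : MeasurableSet (Ak ∩ S) := mAk.inter hS
  have fT : volume (Ak ∩ S) ≠ ∞ := fin _ (inter_subset_left.trans inter_subset_left)
  have fAl : volume Al ≠ ∞ := fin _ inter_subset_left
  -- values of φ
  have vφ : ∀ x, φ x = Ak.indicator (fun x => (v x - k) ^ 2) x := by
    intro x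
    rw [hφ]; unfold testf
    by_cases hb : x ∈ ball z R
    · rw [indicator_of_mem hb]
      by_cases hx : k < v x
      · rw [indicator_of_mem (show x ∈ Ak from ⟨hb, hx⟩), max_eq_left (by linarith)]
      · rw [indicator_of_notMem (fun h : x ∈ Ak => hx h.2), max_eq_right (by linarith)]; norm_num
    · rw [indicator_of_notMem hb, indicator_of_notMem (fun h : x ∈ Ak => hb h.1)]
  have vd : ∀ x, fderiv ℝ φ x = Ak.indicator (fun x => (2 * (v x - k)) • fderiv ℝ v x) x := by
    intro x
    rw [hφ, testf_fderiv hv hsk]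
    by_cases hb : x ∈ ball z R
    · rw [indicator_of_mem hb]
      by_cases hx : k < v x
      · rw [indicator_of_mem (show x ∈ Ak from ⟨hb, hx⟩), max_eq_left (by linarith)]
      · rw [indicator_of_notMem (fun h : x ∈ Ak => hx h.2), max_eq_right (by linarith)]; simp
    · rw [indicator_of_notMem hb, indicator_of_notMem (fun h : x ∈ Ak => hb h.1)]
  have iT : ∀ c : ℝ, Integrable ((Ak ∩ S).indicator fun _ => c) := fun c =>
    (integrable_indicator_iff mT).2 (integrableOn_const fT)
  have vT : ∀ c : ℝ, ∫ x, (Ak ∩ S).indicator (fun _ => c) x = c * volume.real (Ak ∩ S) := by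
    intro c
    rw [integral_indicator mT, setIntegral_const, smul_eq_mul, mul_comm]
  -- main pointwise inequality
  have main : ∀ᵐ x, a x * φ x + Ak.indicator (fun x => (v x - k) * E x) x ≤
      F x + (Ak ∩ S).indicator (fun _ => K * d) x := by
    filter_upwards [hP] with x hx
    simp only [hFdef]
    rw [vd x]
    by_cases hA : x ∈ Ak
    · have h1 := hx hA.1 (hk.trans_lt hA.2)
      have h2 : v x ≤ k₀ + d := hle x hA.1
      have h3 : k < v x := hA.2
      have hW : 0 < v x - k := by linarith
      have hWd : v x - k ≤ d := by linarith
      have h5 : (v x - k) * (E x - S.indicator (fun _ => K) x) ≤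
          (v x - k) * (2 * fderiv ℝ v x (V x) - e x * d) := mul_le_mul_of_nonneg_left h1 hW.le
      have h6 : e x * φ x ≤ (v x - k) * (e x * d) := by
        rw [vφ x, indicator_of_mem hA]
        have := mul_le_mul_of_nonneg_left hWd (mul_nonneg (he x) hW.le)
        nlinarith
      have h7 : (v x - k) * S.indicator (fun _ => K) x ≤ (Ak ∩ S).indicator (fun _ => K * d) x := by
        by_cases hS' : x ∈ S
        · rw [indicator_of_mem hS', indicator_of_mem (show x ∈ Ak ∩ S from ⟨hA, hS'⟩)]
          nlinarith
        · rw [indicator_of_notMem hS', indicator_of_notMem (fun h : x ∈ Ak ∩ S => hS' h.2)]; simp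
      rw [indicator_of_mem hA, indicator_of_mem hA]
      simp only [FunLike.coe_smul, Pi.smul_apply, smul_eq_mul]
      nlinarith
    · rw [indicator_of_notMem hA, indicator_of_notMem hA, vφ x, indicator_of_notMem hA,
        indicator_of_notMem (fun h : x ∈ Ak ∩ S => hA h.1)]
      simp
  have hAlk : Al ⊆ Ak := fun x hx => ⟨hx.1, hkl.trans hx.2⟩
  have hge : ∀ x ∈ Al, (l - k) ^ 2 ≤ φ x := by
    intro x hx
    rw [vφ x, indicator_of_mem (hAlk hx)]
    have : l < v x := hx.2
    have h0 : 0 ≤ l - k := by linarith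
    gcongr
  have hnn : ∀ x, 0 ≤ Ak.indicator (fun x => (v x - k) * E x) x := by
    intro x
    apply indicator_nonneg
    intro y hy
    have : k < v y := hy.2
    exact mul_nonneg (by linarith) (hE y)
  constructor
  · intro m hm hm0
    have : ∫ x, Al.indicator (fun _ => m * (l - k) ^ 2) x ≤
        ∫ x, (F x + (Ak ∩ S).indicator (fun _ => K * d) x) := by
      refine integral_mono_ae ((integrable_indicator_iff mAl).2 (integrableOn_const fAl))
        (hFi.add (iT _)) ?_
      filter_upwards [main, hm] with x h1 h2
      refine le_trans ?_ h1
      by_cases hA : x ∈ Al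
      · rw [indicator_of_mem hA]
        have h3 := h2 hA.1 (hk.trans_lt (hAlk hA).2)
        have h4 := mul_le_mul h3 (hge x hA) (by positivity) (ha x)
        linarith [hnn x]
      · rw [indicator_of_notMem hA]
        have := mul_nonneg (ha x) (hφ0 x)
        linarith [hnn x]
    rw [integral_indicator mAl, setIntegral_const, smul_eq_mul, integral_add hFi (iT _), vT] at this
    nlinarith
  · have hcont' : Continuous (fderiv ℝ φ) := hφ1.continuous_fderiv (by norm_num)
    have hIntD : Integrable (fderiv ℝ φ) := hcont'.integrable_of_hasCompactSupport (hφc.fderiv ℝ)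
    have key : ∫ x, ‖fderiv ℝ φ x‖ ≤
        ∫ x, (2 * L) * (F x + (Ak ∩ S).indicator (fun _ => 2 * (K * d)) x) := by
      refine integral_mono_ae hIntD.norm ((hFi.add (iT _)).const_mul _) ?_
      filter_upwards [main] with x h1
      have hap := mul_nonneg (ha x) (hφ0 x)
      rw [vd x]
      by_cases hA : x ∈ Ak
      · rw [indicator_of_mem hA] at h1 ⊢
        have h2 := hG x hA.1 (hk.trans_lt hA.2)
        have h3 : k < v x := hA.2
        have hWd : v x - k ≤ d := by linarith [hle x hA.1]
        have hW : 0 < v x - k := by linarith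
        rw [norm_smul, Real.norm_of_nonneg (by linarith)]
        have h4 := mul_le_mul_of_nonneg_left h2 (by linarith : 0 ≤ 2 * (v x - k))
        refine h4.trans ?_
        have h7 : (v x - k) * S.indicator (fun _ => K) x + (Ak ∩ S).indicator (fun _ => K * d) x ≤
            (Ak ∩ S).indicator (fun _ => 2 * (K * d)) x := by
          by_cases hS' : x ∈ S
          · rw [indicator_of_mem hS', indicator_of_mem (show x ∈ Ak ∩ S from ⟨hA, hS'⟩),
              indicator_of_mem (show x ∈ Ak ∩ S from ⟨hA, hS'⟩)]
            nlinarith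
          · rw [indicator_of_notMem hS', indicator_of_notMem (fun h : x ∈ Ak ∩ S => hS' h.2),
              indicator_of_notMem (fun h : x ∈ Ak ∩ S => hS' h.2)]; simp
        have h8 : (v x - k) * (E x + S.indicator (fun _ => K) x) ≤
            F x + (Ak ∩ S).indicator (fun _ => 2 * (K * d)) x := by linarith
        have := mul_le_mul_of_nonneg_left h8 (by linarith : 0 ≤ 2 * L)
        linarith
      · rw [indicator_of_notMem hA] at h1 ⊢
        rw [indicator_of_notMem (fun h : x ∈ Ak ∩ S => hA h.1)] at h1 ⊢
        rw [norm_zero]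
        have : 0 ≤ F x := by linarith
        positivity
    have ev : ∫ x, (2 * L) * (F x + (Ak ∩ S).indicator (fun _ => 2 * (K * d)) x) ≤
        4 * L * K * d * volume.real (Ak ∩ S) := by
      rw [integral_const_mul, integral_add hFi (iT _), vT]
      have := mul_nonpos_of_nonneg_of_nonpos (by linarith : 0 ≤ 2 * L) hF
      nlinarith
    have := hsob φ hφ1 hφc Al fAl _ (by positivity) hge _ (key.trans ev)
    rwa [← mul_assoc] at this

theorem young_aux {p a ε t : ℝ} (hp : 1 < p) (ha : 0 < a) (hε : 0 < ε) (ht : 0 ≤ t) :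
    a * t ^ (p - 1) ≤ ε * t ^ p + ε ^ (1 - p) * a ^ p := by
  rcases le_or_gt t (a / ε) with h | h
  · have h1 : t ^ (p - 1) ≤ (a / ε) ^ (p - 1) := Real.rpow_le_rpow ht h (by linarith)
    have h2 : a * (a / ε) ^ (p - 1) = ε ^ (1 - p) * a ^ p := by
      rw [Real.div_rpow ha.le hε.le, show (1 - p) = -(p - 1) by ring, Real.rpow_neg hε.le,
        Real.rpow_sub_one ha.ne']
      field_simp
    have h3 : 0 ≤ ε * t ^ p := by positivity
    nlinarith
  · have ht0 : 0 < t := lt_of_le_of_lt (by positivity) h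
    have h1 : a ≤ ε * t := by rw [div_lt_iff₀ hε] at h; linarith
    have h2 : t ^ p = t * t ^ (p - 1) := by
      rw [Real.rpow_sub_one ht0.ne']; field_simp
    have h3 : 0 ≤ ε ^ (1 - p) * a ^ p := by positivity
    have h4 : 0 ≤ t ^ (p - 1) := by positivity
    rw [h2]; nlinarith

theorem lin_aux {p t D : ℝ} (hp : 1 < p) (ht : 0 < t) (hD : 0 ≤ D) :
    D ≤ t ^ (1 - p) * D ^ p + t := by
  rcases le_or_gt D t with h | h
  · have : 0 ≤ t ^ (1 - p) * D ^ p := by positivity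
    linarith
  · have hD0 : 0 < D := ht.trans h
    have h1 : D ^ (1 - p) ≤ t ^ (1 - p) := Real.rpow_le_rpow_of_nonpos ht h.le (by linarith)
    have h2 : D = D ^ (1 - p) * D ^ p := by
      rw [← Real.rpow_add hD0]; simp
    have h3 : 0 ≤ D ^ p := by positivity
    nlinarith

theorem norm_gradient_eq {n : ℕ} (u : Euc n → ℝ) (x : Euc n) :
    ‖gradient u x‖ = ‖fderiv ℝ u x‖ := by
  unfold gradient; simp

/-- from the weak formulation to C¹ test functions -/
theorem weak_setup {n : ℕ} {p C₁ C₂ α : ℝ} (hp : 1 < p) (hC₂ : 0 < C₂) (hα₁ : p - 1 ≤ α)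
    {A : Euc n → Euc n → Euc n} (hA : StructCond A p C₁ C₂)
    {b : Euc n → ℝ} (hb : Measurable b) (hb0 : ∀ x, 0 ≤ b x) (hbl : LocBdd b)
    {q : Euc n → ℝ} (hq : Measurable q) (hq0 : ∀ x, 0 ≤ q x) (hql : LocBdd q)
    {g : ℝ → ℝ} (hg : ContinuousOn g (Set.Ici 0)) (_hg0 : ∀ t ∈ Set.Ici (0 : ℝ), 0 ≤ g t)
    {u : Euc n → ℝ} (hu : ContDiff ℝ 1 u) (hu0 : ∀ x, 0 ≤ u x)
    (hw : IsWeakSol A b α (fun x => q x * g (u x)) Set.univ u)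
    (φ : Euc n → ℝ) (hφ : ContDiff ℝ 1 φ) (hc : HasCompactSupport φ) (h0 : ∀ x, 0 ≤ φ x) :
    Integrable (fun x => (q x * g (u x)) * φ x + fderiv ℝ φ x (A x (gradient u x))
      - (b x * ‖fderiv ℝ u x‖ ^ α) * φ x) ∧
    ∫ x, ((q x * g (u x)) * φ x + fderiv ℝ φ x (A x (gradient u x))
      - (b x * ‖fderiv ℝ u x‖ ^ α) * φ x) ≤ 0 := by
  have hcont' : Continuous (fderiv ℝ u) := hu.continuous_fderiv (by norm_num)
  have hgr : Continuous (gradient u) := by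
    unfold gradient; exact (LinearIsometryEquiv.continuous _).comp hcont'
  have hgu : Continuous (fun x => g (u x)) := hg.comp_continuous hu.continuous hu0
  have bD : ∀ R : ℝ, ∃ M, ∀ x ∈ closedBall (0 : Euc n) R, ‖fderiv ℝ u x‖ ≤ M := fun R => by
    obtain ⟨M, hM⟩ := (isCompact_closedBall (0 : Euc n) R).exists_bound_of_continuousOn
      hcont'.continuousOn
    exact ⟨M, hM⟩
  refine weak_C1 (V := fun x => A x (gradient u x)) (a := fun x => q x * g (u x))
    (e := fun x => b x * ‖fderiv ℝ u x‖ ^ α) ?_ ?_ ?_ ?_ ?_ ?_ ?_ hφ hc h0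
  · exact hA.1.comp (measurable_id.prodMk hgr.measurable)
  · exact hq.mul hgu.measurable
  · exact hb.mul ((hcont'.norm.measurable).pow_const _)
  · intro R
    obtain ⟨M, hM⟩ := bD R
    refine ⟨C₂ * M ^ (p - 1), fun x hx => ((hA.2 x _).2).trans ?_⟩
    rw [norm_gradient_eq]
    gcongr
    exact hM x hx
  · intro R
    obtain ⟨Cq, hCq⟩ := hql _ (isCompact_closedBall (0 : Euc n) R)
    obtain ⟨M, hM⟩ := (isCompact_closedBall (0 : Euc n) R).exists_bound_of_continuousOn
      hgu.continuousOn
    refine ⟨Cq * M, fun x hx => ?_⟩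
    rw [abs_mul, abs_of_nonneg (hq0 x)]
    exact mul_le_mul (hCq x hx) (hM x hx) (abs_nonneg _) ((hq0 x).trans (hCq x hx))
  · intro R
    obtain ⟨Cb, hCb⟩ := hbl _ (isCompact_closedBall (0 : Euc n) R)
    obtain ⟨M, hM⟩ := bD R
    refine ⟨Cb * M ^ α, fun x hx => ?_⟩
    rw [abs_of_nonneg (mul_nonneg (hb0 x) (by positivity))]
    have h1 := hb0 x
    have h2 := hCb x hx
    have h3 := hM x hx
    have h4 : ‖fderiv ℝ u x‖ ^ α ≤ M ^ α := Real.rpow_le_rpow (norm_nonneg _) h3 (by linarith)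
    exact mul_le_mul h2 h4 (by positivity) (h1.trans h2)
  · intro ψ hψ hcψ hψ0
    have := hw ψ hψ hcψ (subset_univ _) hψ0
    simp only [setIntegral_univ, norm_gradient_eq] at this
    exact this

theorem max_principle {n : ℕ} (hn : 2 ≤ n) {p C₁ : ℝ} (hp : 1 < p) (hC₁ : 0 < C₁)
    (V : Euc n → Euc n) (a e : Euc n → ℝ) (ha : ∀ x, 0 ≤ a x) (he : ∀ x, 0 ≤ e x)
    (HJ : ∀ φ : Euc n → ℝ, ContDiff ℝ 1 φ → HasCompactSupport φ → (∀ x, 0 ≤ φ x) →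
      Integrable (fun x => a x * φ x + fderiv ℝ φ x (V x) - e x * φ x) ∧
      ∫ x, (a x * φ x + fderiv ℝ φ x (V x) - e x * φ x) ≤ 0)
    {u : Euc n → ℝ} (hu : ContDiff ℝ 1 u) 
    (hV : ∀ x, C₁ * ‖fderiv ℝ u x‖ ^ p ≤ fderiv ℝ u x (V x))
    {r B : ℝ} (hr : 0 < r) (hB : 0 < B)
    (heB : ∀ x ∈ ball (0 : Euc n) r, e x ≤ B * ‖fderiv ℝ u x‖ ^ (p - 1)) :
    ∀ x ∈ closedBall (0 : Euc n) r, u x ≤ sphMax u r := by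
  have huc := hu.continuous
  have hbdd : BddAbove (u '' sphere (0 : Euc n) r) :=
    ((isCompact_sphere (0 : Euc n) r).image huc).bddAbove
  have hM : ∀ x ∈ sphere (0 : Euc n) r, u x ≤ sphMax u r := fun x hx =>
    le_csSup hbdd (mem_image_of_mem u hx)
  have : Nonempty (Fin n) := ⟨⟨0, by omega⟩⟩
  have : Nontrivial (Euc n) := inferInstance
  obtain ⟨y₀, hy₀⟩ : (sphere (0 : Euc n) r).Nonempty := NormedSpace.sphere_nonempty.2 hr.le
  obtain ⟨x₁, hx₁, hmax⟩ := (isCompact_closedBall (0 : Euc n) r).exists_isMaxOn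
    ⟨0, by simp [hr.le]⟩ huc.continuousOn
  by_contra hcon
  push Not at hcon
  obtain ⟨x₀, hx₀, hlt⟩ := hcon
  set M := sphMax u r with hMdef
  set s := u x₁ with hs
  have hMs : M < s := hlt.trans_le (hmax hx₀)
  have hmax' : ∀ x ∈ closedBall (0 : Euc n) r, u x ≤ s := fun x hx => hmax hx
  obtain ⟨Cs, hCs, hen⟩ := energy hn
  have hen := hen V a e ha he HJ u hu 0 r
  set S : Set (Euc n) := {x | u x < s} with hS
  have oS : IsOpen S := isOpen_lt huc continuous_const
  set κ := C₁ ^ (1 - p) * B ^ p with hκ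
  have hκ0 : 0 < κ := by positivity
  set L₀ := 1 / C₁ + 1 / κ with hL₀
  have hL₀0 : 0 < L₀ := by positivity
  set c₀ : ℝ := ((1 / 4) * (1 / 4) ^ n / (Cs * (4 * L₀ * κ))) ^ n with hc₀
  have hc₀0 : 0 < c₀ := by positivity
  set μ : ℝ → ℝ := fun k => volume.real (ball (0 : Euc n) r ∩ {x | k < u x} ∩ S) with hμ
  have fin : ∀ t : Set (Euc n), t ⊆ ball 0 r → volume t ≠ ∞ := fun t hs =>
    ((measure_mono hs).trans_lt measure_ball_lt_top).ne
  -- choose k₀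
  obtain ⟨k₀, hk₀M, hk₀s, hk₀μ⟩ : ∃ k₀, M < k₀ ∧ k₀ < s ∧ μ k₀ ≤ c₀ := by
    let T : ℕ → Set (Euc n) := fun j =>
      ball (0 : Euc n) r ∩ {x | s - (s - M) / (j + 2) < u x} ∩ S
    have hanti : Antitone T := by
      intro i j hij x hx
      refine ⟨⟨hx.1.1, ?_⟩, hx.2⟩
      have h1 : s - (s - M) / (j + 2) < u x := hx.1.2
      have h2 : (s - M) / ((j : ℝ) + 2) ≤ (s - M) / ((i : ℝ) + 2) := by
        have : (i : ℝ) ≤ j := by exact_mod_cast hij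
        gcongr
      show s - (s - M) / (i + 2) < u x
      linarith
    have hmeas : ∀ j, NullMeasurableSet (T j) volume := fun j =>
      ((isOpen_ball.inter (isOpen_lt continuous_const huc)).inter oS).measurableSet.nullMeasurableSet
    have hem : ⋂ j, T j = ∅ := by
      rw [eq_empty_iff_forall_notMem]
      intro x hx
      rw [mem_iInter] at hx
      have hlt' : u x < s := (hx 0).2
      have hlim : Tendsto (fun j : ℕ => s - (s - M) / ((j : ℝ) + 2)) atTop (nhds (s - 0)) := by
        refine tendsto_const_nhds.sub ?_
        exact tendsto_const_nhds.div_atTop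
          (tendsto_atTop_add_const_right _ _ tendsto_natCast_atTop_atTop)
      have := le_of_tendsto' hlim (fun j => le_of_lt (hx j).1.2)
      linarith
    have ht := tendsto_measure_iInter_atTop hmeas hanti
      ⟨0, fin _ (inter_subset_left.trans inter_subset_left)⟩
    rw [hem, measure_empty] at ht
    have ht' := (ENNReal.tendsto_toReal ENNReal.zero_ne_top).comp ht
    obtain ⟨j, hj⟩ := (ht'.eventually (Iio_mem_nhds (by simpa using hc₀0))).exists
    have hj2 : (0 : ℝ) < j + 2 := by positivity
    refine ⟨s - (s - M) / (j + 2), ?_, ?_, le_of_lt hj⟩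
    · have : (s - M) / ((j : ℝ) + 2) < s - M := by
        rw [div_lt_iff₀ hj2]
        have : (0 : ℝ) ≤ j := by positivity
        nlinarith
      linarith
    · have : 0 < (s - M) / ((j : ℝ) + 2) := div_pos (by linarith) hj2
      linarith
  set d := s - k₀ with hd
  have hd0 : 0 < d := by linarith
  have hdd : d ^ (1 - p) * d ^ p = d := by rw [← Real.rpow_add hd0]; simp
  have hen := hen k₀ d (κ * d ^ p) (L₀ * d ^ (1 - p)) (by positivity) (by positivity)
    (fun x hx => (hM x hx).trans_lt hk₀M)
    (fun x hx => by rw [hd]; linarith [hmax' x (ball_subset_closedBall hx)])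
    (fun x => C₁ * ‖fderiv ℝ u x‖ ^ p) S (fun x => by positivity) oS.measurableSet
  have hcrit : ∀ x ∈ ball (0 : Euc n) r, x ∉ S → fderiv ℝ u x = 0 := by
    intro x hx hxS
    have h1 : s ≤ u x := not_lt.1 hxS
    apply IsLocalMax.fderiv_eq_zero
    filter_upwards [isOpen_ball.mem_nhds hx] with y hy
    exact (hmax' y (ball_subset_closedBall hy)).trans h1
  have hen := hen (by
      refine Eventually.of_forall fun x hx _ => ?_
      by_cases hxS : x ∈ S
      · rw [indicator_of_mem hxS]
        have h1 := hV x
        have h2 := mul_le_mul_of_nonneg_right (heB x hx) hd0.le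
        have h3 := young_aux hp (mul_pos hB hd0) hC₁ (norm_nonneg (fderiv ℝ u x))
        rw [Real.mul_rpow hB.le hd0.le, ← mul_assoc] at h3
        have h4 : B * ‖fderiv ℝ u x‖ ^ (p - 1) * d = B * d * ‖fderiv ℝ u x‖ ^ (p - 1) := by ring
        linarith
      · have h0 := hcrit x hx hxS
        have h2 := heB x hx
        rw [indicator_of_notMem hxS]
        rw [h0] at h2 ⊢
        rw [norm_zero, Real.zero_rpow (by linarith)] at h2 ⊢
        have : e x = 0 := le_antisymm (by linarith) (he x)
        simp [this])
    (by
      intro x hx _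
      by_cases hxS : x ∈ S
      · rw [indicator_of_mem hxS]
        refine (lin_aux hp hd0 (norm_nonneg (fderiv ℝ u x))).trans ?_
        have hP : 0 ≤ ‖fderiv ℝ u x‖ ^ p := by positivity
        have hQ : 0 ≤ d ^ (1 - p) := by positivity
        have h1 : 1 ≤ L₀ * C₁ := by
          rw [hL₀, add_mul, one_div_mul_cancel hC₁.ne']
          have : 0 ≤ 1 / κ * C₁ := by positivity
          linarith
        have h2 : 1 ≤ L₀ * κ := by
          rw [hL₀, add_mul, one_div_mul_cancel hκ0.ne']
          have : 0 ≤ 1 / C₁ * κ := by positivity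
          linarith
        calc d ^ (1 - p) * ‖fderiv ℝ u x‖ ^ p + d
            ≤ (L₀ * C₁) * (d ^ (1 - p) * ‖fderiv ℝ u x‖ ^ p) + (L₀ * κ) * d := by
              exact add_le_add (le_mul_of_one_le_left (by positivity) h1)
                (le_mul_of_one_le_left hd0.le h2)
          _ = (L₀ * C₁) * (d ^ (1 - p) * ‖fderiv ℝ u x‖ ^ p) + (L₀ * κ) * (d ^ (1 - p) * d ^ p) := by
              rw [hdd]
          _ = _ := by ring
      · rw [hcrit x hx hxS, norm_zero]
        rw [indicator_of_notMem hxS]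
        positivity)
  have hμa : Antitone μ := by
    intro k l hkl
    refine measureReal_mono ?_ (fin _ (inter_subset_left.trans inter_subset_left))
    rintro x ⟨⟨h1, h2⟩, h3⟩
    exact ⟨⟨h1, lt_of_le_of_lt hkl h2⟩, h3⟩
  have hΛ : Cs * (4 * (L₀ * d ^ (1 - p)) * (κ * d ^ p) * d) = Cs * (4 * L₀ * κ) * d ^ 2 := by
    calc _ = Cs * (4 * L₀ * κ) * (d ^ (1 - p) * d ^ p) * d := by ring
      _ = _ := by rw [hdd]; ring
  have hzero : μ (k₀ + d / 2) = 0 := by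
    refine degiorgi_seq hn μ (fun k => measureReal_nonneg) hμa (d := d / 2)
      (Λ := Cs * (4 * L₀ * κ) * d ^ 2) (by positivity) (by positivity) ?_ ?_
    · intro k l hk hkl
      have h1 := (hen k l hk hkl).2
      rw [hΛ] at h1
      refine le_trans ?_ h1
      have : μ l ≤ volume.real (ball (0 : Euc n) r ∩ {x | l < u x}) :=
        measureReal_mono inter_subset_left (fin _ inter_subset_left)
      have h0 : 0 ≤ μ l := measureReal_nonneg
      gcongr
    · refine hk₀μ.trans_eq ?_
      rw [hc₀]; congr 1; field_simp; norm_num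
  have hopen : IsOpen (ball (0 : Euc n) r ∩ {x | k₀ + d / 2 < u x} ∩ S) :=
    (isOpen_ball.inter (isOpen_lt continuous_const huc)).inter oS
  have hempty : ball (0 : Euc n) r ∩ {x | k₀ + d / 2 < u x} ∩ S = ∅ := by
    rw [← hopen.measure_eq_zero_iff volume]
    exact (measureReal_eq_zero_iff (fin _ (inter_subset_left.trans inter_subset_left))).1 hzero
  -- intermediate value
  have hpre : IsPreconnected (closedBall (0 : Euc n) r) := (convex_closedBall _ _).isPreconnected
  have hiv := hpre.intermediate_value (sphere_subset_closedBall hy₀) hx₁ huc.continuousOn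
  have hy₀M := hM y₀ hy₀
  obtain ⟨y, hy, hyv⟩ := hiv (show k₀ + 3 * d / 4 ∈ Icc (u y₀) (u x₁) from
    ⟨by linarith, by rw [← hs]; linarith⟩)
  have hyb : y ∈ ball (0 : Euc n) r := by
    rcases (mem_closedBall.1 hy).lt_or_eq with h | h
    · exact h
    · have := hM y h
      linarith
  have : y ∈ ball (0 : Euc n) r ∩ {x | k₀ + d / 2 < u x} ∩ S := by
    refine ⟨⟨hyb, ?_⟩, ?_⟩
    · show k₀ + d / 2 < u y
      linarith
    · show u y < s
      linarith
  rw [hempty] at this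
  exact this

theorem pow_aux {p α t D : ℝ} (hα0 : 0 ≤ α) (hα : α ≤ p) (ht : 0 < t) (hD : 0 ≤ D) :
    D ^ α ≤ t ^ (α - p) * (t ^ p + D ^ p) := by
  have h0 : 0 ≤ t ^ (α - p) * D ^ p := by positivity
  have h0' : 0 ≤ t ^ (α - p) * t ^ p := by positivity
  rcases le_or_gt D t with h | h
  · have h1 : D ^ α ≤ t ^ α := Real.rpow_le_rpow hD h hα0
    have h2 : t ^ α = t ^ (α - p) * t ^ p := by rw [← Real.rpow_add ht]; simp
    rw [mul_add]; linarith
  · have hD0 : 0 < D := ht.trans h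
    have h1 : D ^ (α - p) ≤ t ^ (α - p) := Real.rpow_le_rpow_of_nonpos ht h.le (by linarith)
    have h2 : D ^ α = D ^ (α - p) * D ^ p := by rw [← Real.rpow_add hD0]; simp
    have h3 : 0 ≤ D ^ p := by positivity
    rw [mul_add]; nlinarith

theorem fderiv_parab {n : ℕ} {u : Euc n → ℝ} (hu : ContDiff ℝ 1 u) (c : ℝ) (z x y : Euc n) :
    fderiv ℝ (fun x => u x - c * ‖x - z‖ ^ 2) x y = fderiv ℝ u x y - 2 * c * ⟪x - z, y⟫ := by
  have h1 : HasFDerivAt u (fderiv ℝ u x) x := ((hu.differentiable (by norm_num)) x).hasFDerivAt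
  have h2 := ((hasFDerivAt_id x).sub_const z).norm_sq
  have h3 := h1.sub (h2.const_mul c)
  have h4 := h3.fderiv
  simp only [id] at h4
  erw [h4]
  simp [inner_sub_left]
  ring

/-- the nested statement of the maximum principle for solutions -/
theorem sol_max {n : ℕ} (hn : 2 ≤ n) {p C₁ C₂ α : ℝ} (hp : 1 < p) (hC₁ : 0 < C₁)
    (hα₁ : p - 1 ≤ α)
    {A : Euc n → Euc n → Euc n} (hA : StructCond A p C₁ C₂)
    {b : Euc n → ℝ} (hb0 : ∀ x, 0 ≤ b x) (hbl : LocBdd b)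
    {a : Euc n → ℝ} (ha : ∀ x, 0 ≤ a x)
    {u : Euc n → ℝ} (hu : ContDiff ℝ 1 u)
    (HJ : ∀ φ : Euc n → ℝ, ContDiff ℝ 1 φ → HasCompactSupport φ → (∀ x, 0 ≤ φ x) →
      Integrable (fun x => a x * φ x + fderiv ℝ φ x (A x (gradient u x))
        - (b x * ‖fderiv ℝ u x‖ ^ α) * φ x) ∧
      ∫ x, (a x * φ x + fderiv ℝ φ x (A x (gradient u x))
        - (b x * ‖fderiv ℝ u x‖ ^ α) * φ x) ≤ 0)
    {r : ℝ} (hr : 0 < r) : ∀ x ∈ closedBall (0 : Euc n) r, u x ≤ sphMax u r := by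
  have hcont' : Continuous (fderiv ℝ u) := hu.continuous_fderiv (by norm_num)
  obtain ⟨M, hM⟩ := (isCompact_closedBall (0 : Euc n) r).exists_bound_of_continuousOn
      hcont'.continuousOn
  obtain ⟨Cb, hCb⟩ := hbl _ (isCompact_closedBall (0 : Euc n) r)
  refine max_principle hn hp hC₁ (fun x => A x (gradient u x)) a
    (fun x => b x * ‖fderiv ℝ u x‖ ^ α) ha (fun x => mul_nonneg (hb0 x) (by positivity)) HJ hu
    ?_ hr (B := |Cb * M ^ (α - p + 1)| + 1) (by positivity) ?_
  · intro x
    have := (hA.2 x (gradient u x)).1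
    rwa [inner_gradient_left, norm_gradient_eq] at this
  · intro x hx
    have hx' := ball_subset_closedBall hx
    have h1 : ‖fderiv ℝ u x‖ ^ α = ‖fderiv ℝ u x‖ ^ (α - p + 1) * ‖fderiv ℝ u x‖ ^ (p - 1) := by
      rw [← Real.rpow_add_of_nonneg (norm_nonneg _) (by linarith) (by linarith)]
      congr 1; ring
    have h2 : ‖fderiv ℝ u x‖ ^ (α - p + 1) ≤ M ^ (α - p + 1) :=
      Real.rpow_le_rpow (norm_nonneg _) (hM x hx') (by linarith)
    have h3 : b x * ‖fderiv ℝ u x‖ ^ (α - p + 1) ≤ Cb * M ^ (α - p + 1) :=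
      mul_le_mul (hCb x hx') h2 (by positivity) ((hb0 x).trans (hCb x hx'))
    rw [h1, ← mul_assoc]
    refine mul_le_mul_of_nonneg_right ?_ (by positivity)
    have := le_abs_self (Cb * M ^ (α - p + 1))
    linarith

set_option maxHeartbeats 4000000 in
/-- Lemma 3.1: bound from below for the growth of `M(r;u)` when the `b`-term is small. -/
theorem stmt_4 (n : ℕ) (hn : 2 ≤ n) (p C₁ C₂ α : ℝ) (hp : 1 < p)
    (hC₁ : 0 < C₁) (hC₂ : 0 < C₂) (hα₁ : p - 1 ≤ α) (hα₂ : α ≤ p)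
    (β : ℝ) (hβ0 : 0 < β) (hβ1 : β < 1) :
    ∃ C : ℝ, 0 < C ∧
      ∀ (A : Euc n → Euc n → Euc n), StructCond A p C₁ C₂ →
      ∀ (b : Euc n → ℝ), Measurable b → (∀ x, 0 ≤ b x) → LocBdd b →
      ∀ (q : Euc n → ℝ), Measurable q → (∀ x, 0 ≤ q x) → LocBdd q →
      ∀ (g : ℝ → ℝ), ContinuousOn g (Set.Ici 0) → (∀ t ∈ Set.Ici (0 : ℝ), 0 ≤ g t) →
        (∀ t : ℝ, 0 < t → 0 < g t) →
      ∀ u : Euc n → ℝ, ContDiff ℝ 1 u → (∀ x, 0 ≤ u x) →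
        IsWeakSol A b α (fun x => q x * g (u x)) Set.univ u →
      ∀ r₁ r₂ : ℝ, 0 < r₁ → r₁ < r₂ →
        sphMax u r₁ < sphMax u r₂ → β * sphMax u r₂ ≤ sphMax u r₁ →
        (sphMax u r₂ - sphMax u r₁) ^ (α - p + 1) * (r₂ - r₁) ^ (p - α) *
            essSup b (volume.restrict (Ann n r₁ r₂)) ≤ C₁ / 4 →
        C * (r₂ - r₁) ^ p * essInf q (volume.restrict (Ann n r₁ r₂)) *
            sInf (g '' Set.Ioo (β * sphMax u r₁) (sphMax u r₂)) ≤
          (sphMax u r₂ - sphMax u r₁) ^ (p - 1) := by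
  obtain ⟨Cs, hCs, hen⟩ := energy hn
  set K₀ : ℝ := (C₁ / 2) ^ (1 - p) * (16 * C₂) ^ p + C₁ / 2 with hK₀
  have hK₀0 : 0 < K₀ := by positivity
  set L₀ : ℝ := 1 / C₁ + 9 / K₀ with hL₀
  have hL₀0 : 0 < L₀ := by positivity
  set c₃ : ℝ := (β / 4) ^ 2 * (1 / 4) ^ n / (8 * Cs * L₀ * K₀) with hc₃
  have hc₃0 : 0 < c₃ := by positivity
  set ω : ℝ := volume.real (ball (0 : Euc n) 1) with hω
  have hω0 : 0 < ω := by
    rw [hω, measureReal_def]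
    exact ENNReal.toReal_pos (measure_ball_pos volume _ one_pos).ne' measure_ball_lt_top.ne
  refine ⟨β ^ 2 * c₃ ^ n / (8 * K₀ * ω), by positivity, ?_⟩
  intro A hA b hb hb0 hbl q hq hq0 hql g hg hg0 hgp u hu hu0 hw r₁ r₂ hr₁ hr₂ hM12 hMβ hbs
  set m₁ := sphMax u r₁ with hm₁
  set m₂ := sphMax u r₂ with hm₂
  set q₀ := essInf q (volume.restrict (Ann n r₁ r₂)) with hq₀
  set g₀ := sInf (g '' Set.Ioo (β * m₁) m₂) with hg₀
  set B := essSup b (volume.restrict (Ann n r₁ r₂)) with hB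
  have huc := hu.continuous
  obtain ⟨δ, hδ⟩ : ∃ δ, δ = m₂ - m₁ := ⟨_, rfl⟩
  obtain ⟨ρ, hρ⟩ : ∃ ρ, ρ = r₂ - r₁ := ⟨_, rfl⟩
  rw [← hδ, ← hρ] at hbs
  rw [← hδ, ← hρ]
  have hδ0 : 0 < δ := by linarith
  have hρ0 : 0 < ρ := by linarith
  rcases le_or_gt (q₀ * g₀) 0 with hqg | hqg
  · have h1 : β ^ 2 * c₃ ^ n / (8 * K₀ * ω) * ρ ^ p * q₀ * g₀ ≤ 0 := by
      rw [mul_assoc]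
      exact mul_nonpos_of_nonneg_of_nonpos (by positivity) hqg
    exact h1.trans (by positivity)
  have ha : ∀ x, 0 ≤ q x * g (u x) := fun x => mul_nonneg (hq0 x) (hg0 _ (hu0 x))
  have HJ := weak_setup hp hC₂ hα₁ hA hb hb0 hbl hq hq0 hql hg hg0 hu hu0 hw
  have hmax : ∀ r : ℝ, 0 < r → ∀ x ∈ closedBall (0 : Euc n) r, u x ≤ sphMax u r := fun r hr =>
    sol_max hn hp hC₁ hα₁ hA hb0 hbl ha hu HJ hr
  have : Nonempty (Fin n) := ⟨⟨0, by omega⟩⟩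
  have : Nontrivial (Euc n) := inferInstance
  have hatt : ∀ r : ℝ, 0 < r → ∃ x : Euc n, ‖x‖ = r ∧ u x = sphMax u r := by
    intro r hr
    obtain ⟨x, hx, h⟩ := (isCompact_sphere (0 : Euc n) r).exists_sSup_image_eq
      (NormedSpace.sphere_nonempty.2 hr.le) huc.continuousOn
    exact ⟨x, by simpa using hx, h.symm⟩
  obtain ⟨x₁, hx₁, hux₁⟩ := hatt r₁ hr₁
  obtain ⟨z, hz, huz⟩ := hatt ((r₁ + r₂) / 2) (by linarith)
  have hzm : m₁ ≤ u z := by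
    rw [huz, hm₁, ← hux₁]
    exact hmax _ (by linarith) x₁ (by simp [hx₁]; linarith)
  have hm₁0 : 0 < m₁ := by
    have h0 : 0 ≤ m₁ := by rw [hm₁, ← hux₁]; exact hu0 _
    have h1 : 0 < m₂ := by linarith
    have := mul_pos hβ0 h1
    linarith
  -- geometry
  have hcb : ∀ x ∈ closedBall z (ρ / 2), u x ≤ m₂ := by
    intro x hx
    apply hmax r₂ (by linarith)
    have h1 : ‖x - z‖ ≤ ρ / 2 := by simpa [dist_eq_norm] using hx
    have h2 := norm_le_norm_add_norm_sub' x z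
    simp only [mem_closedBall, dist_zero_right]
    linarith
  have hann : ball z (ρ / 2) ⊆ Ann n r₁ r₂ := by
    intro x hx
    have h1 : ‖x - z‖ < ρ / 2 := by simpa [dist_eq_norm] using hx
    have h2 := norm_le_norm_add_norm_sub' x z
    have h3 := norm_le_norm_add_norm_sub' z x
    rw [norm_sub_rev] at h3
    exact ⟨by linarith, by linarith⟩
  have mAnn : MeasurableSet (Ann n r₁ r₂) :=
    ((isOpen_lt continuous_const continuous_norm).inter
      (isOpen_lt continuous_norm continuous_const)).measurableSet
  have hbB : ∀ᵐ x, x ∈ ball z (ρ / 2) → b x ≤ B := by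
    obtain ⟨Cb, hCb⟩ := hbl _ (isCompact_closedBall (0 : Euc n) r₂)
    have h1 : ∀ᵐ x ∂(volume.restrict (Ann n r₁ r₂)), b x ≤ Cb :=
      (ae_restrict_iff' mAnn).2 (Eventually.of_forall fun x hx =>
        hCb x (by simpa using hx.2.le))
    have h2 := ae_le_essSup (f := b) (μ := volume.restrict (Ann n r₁ r₂)) ⟨Cb, h1⟩
    filter_upwards [(ae_restrict_iff' mAnn).1 h2] with x hx hxb
    exact hx (hann hxb)
  have hqq : ∀ᵐ x, x ∈ ball z (ρ / 2) → q₀ ≤ q x := by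
    have h2 := ae_essInf_le (f := q) (μ := volume.restrict (Ann n r₁ r₂))
      ⟨0, eventually_map.2 (Eventually.of_forall hq0)⟩
    filter_upwards [(ae_restrict_iff' mAnn).1 h2] with x hx hxb
    exact hx (hann hxb)
  have hg₀0 : 0 ≤ g₀ := by
    apply Real.sInf_nonneg
    rintro _ ⟨t, ht, rfl⟩
    exact hg0 t (le_of_lt (lt_trans (by positivity) ht.1))
  have hgb : BddBelow (g '' Set.Ioo (β * m₁) m₂) := by
    refine ⟨0, ?_⟩
    rintro _ ⟨t, ht, rfl⟩
    exact hg0 t (le_of_lt (lt_trans (by positivity) ht.1))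
  have hβm : β * m₁ < m₁ := by nlinarith
  have hgg : ∀ t, β * m₁ < t → t ≤ m₂ → g₀ ≤ g t := by
    intro t ht1 ht2
    rcases ht2.lt_or_eq with h | h
    · exact csInf_le hgb ⟨t, ⟨ht1, h⟩, rfl⟩
    · have hcl : t ∈ closure (Set.Ioo (β * m₁) m₂) := by
        rw [closure_Ioo (by linarith)]; exact ⟨ht1.le, ht2⟩
      have ht0 : t ∈ Set.Ici (0 : ℝ) := le_of_lt (lt_trans (by positivity) ht1)
      have hcw : ContinuousWithinAt g (Set.Ioo (β * m₁) m₂) t :=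
        (hg t ht0).mono fun s hs => le_of_lt (lt_trans (by positivity) hs.1)
      have hne : (nhdsWithin t (Set.Ioo (β * m₁) m₂)).NeBot := mem_closure_iff_nhdsWithin_neBot.1 hcl
      refine ge_of_tendsto hcw.tendsto ?_
      filter_upwards [self_mem_nhdsWithin] with s hs
      exact csInf_le hgb ⟨s, hs, rfl⟩
  -- parameters
  obtain ⟨lam, hlam⟩ : ∃ lam, lam = δ / ρ := ⟨_, rfl⟩
  have hlam0 : 0 < lam := by rw [hlam]; positivity
  obtain ⟨c, hc⟩ : ∃ c, c = 8 * δ / ρ ^ 2 := ⟨_, rfl⟩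
  have hc0 : 0 < c := by rw [hc]; positivity
  obtain ⟨k₀, hk₀⟩ : ∃ k₀, k₀ = m₁ - β * δ := ⟨_, rfl⟩
  have hk₀β : β * m₁ ≤ k₀ := by rw [hk₀, hδ]; nlinarith
  set v : Euc n → ℝ := fun x => u x - c * ‖x - z‖ ^ 2 with hv
  have hvu : ∀ x, v x ≤ u x := fun x => by
    have : 0 ≤ c * ‖x - z‖ ^ 2 := by positivity
    simp only [hv]; linarith
  have hv1 : ContDiff ℝ 1 v :=
    hu.sub (contDiff_const.mul ((contDiff_id.sub contDiff_const).norm_sq ℝ))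
  have hvc := hv1.continuous
  have hvd : ∀ x y, fderiv ℝ v x y = fderiv ℝ u x y - 2 * c * ⟪x - z, y⟫ :=
    fun x y => fderiv_parab hu c z x y
  have hcx : ∀ x ∈ ball z (ρ / 2), ∀ y, |2 * c * ⟪x - z, y⟫| ≤ 8 * lam * ‖y‖ := by
    intro x hx y
    have h1 : ‖x - z‖ < ρ / 2 := by simpa [dist_eq_norm] using hx
    have h2 := abs_real_inner_le_norm (x - z) y
    rw [abs_mul, abs_of_pos (by positivity : 0 < 2 * c)]
    calc 2 * c * |⟪x - z, y⟫| ≤ 2 * c * (‖x - z‖ * ‖y‖) := by gcongr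
      _ ≤ 2 * c * (ρ / 2 * ‖y‖) := by gcongr
      _ = 8 * lam * ‖y‖ := by rw [hc, hlam]; field_simp
  have hll : lam ^ (1 - p) * lam ^ p = lam := by rw [← Real.rpow_add hlam0]; simp
  have hbl' : δ * lam ^ (α - p) * B ≤ C₁ / 4 := by
    have : δ * lam ^ (α - p) = δ ^ (α - p + 1) * ρ ^ (p - α) := by
      rw [hlam, Real.div_rpow hδ0.le hρ0.le, Real.rpow_add_one hδ0.ne',
        show p - α = -(α - p) by ring, Real.rpow_neg hρ0.le]
      field_simp
    rw [this]; exact hbs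
  have hen := hen (fun x => A x (gradient u x)) (fun x => q x * g (u x))
    (fun x => b x * ‖fderiv ℝ u x‖ ^ α) ha (fun x => mul_nonneg (hb0 x) (by positivity)) HJ
    v hv1 z (ρ / 2) k₀ (2 * δ) (K₀ * lam ^ p) (L₀ * lam ^ (1 - p)) (by positivity) (by positivity)
    (by
      intro x hx
      have h1 := hcb x (sphere_subset_closedBall hx)
      have h2 : ‖x - z‖ = ρ / 2 := by simpa [dist_eq_norm] using hx
      have h3 : c * (ρ / 2) ^ 2 = 2 * δ := by rw [hc]; field_simp; norm_num
      simp only [hv, h2, h3]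
      nlinarith)
    (by
      intro x hx
      have h1 := hcb x (ball_subset_closedBall hx)
      have h2 := hvu x
      nlinarith)
    (fun x => C₁ * ‖fderiv ℝ u x‖ ^ p) univ (fun x => by positivity) MeasurableSet.univ
    (by
      filter_upwards [hbB] with x hx hxb _
      rw [indicator_of_mem (mem_univ x), hvd]
      obtain ⟨D, hD⟩ : ∃ D, D = ‖fderiv ℝ u x‖ := ⟨_, rfl⟩
      have hD0 : 0 ≤ D := by rw [hD]; exact norm_nonneg _
      have h1 := (hA.2 x (gradient u x)).1
      have h2 := (hA.2 x (gradient u x)).2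
      rw [inner_gradient_left, norm_gradient_eq, ← hD] at h1
      rw [norm_gradient_eq, ← hD] at h2
      rw [← hD]
      have h3 := le_of_abs_le (hcx x hxb (A x (gradient u x)))
      have h4 : 8 * lam * ‖A x (gradient u x)‖ ≤ 8 * lam * (C₂ * D ^ (p - 1)) := by gcongr
      have h5 := young_aux hp (show 0 < 16 * C₂ * lam by positivity) (half_pos hC₁) hD0
      rw [Real.mul_rpow (by positivity) hlam0.le, ← mul_assoc] at h5
      have h6 := pow_aux (by linarith) hα₂ hlam0 hD0
      have hS : 0 ≤ lam ^ p + D ^ p := by positivity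
      have h7 : δ * lam ^ (α - p) * b x ≤ C₁ / 4 :=
        (mul_le_mul_of_nonneg_left (hx hxb) (by positivity)).trans hbl'
      have h8 : b x * D ^ α * (2 * δ) ≤ C₁ / 2 * (lam ^ p + D ^ p) := by
        have hbx := hb0 x
        calc b x * D ^ α * (2 * δ) ≤ b x * (lam ^ (α - p) * (lam ^ p + D ^ p)) * (2 * δ) := by gcongr
          _ = 2 * (δ * lam ^ (α - p) * b x) * (lam ^ p + D ^ p) := by ring
          _ ≤ 2 * (C₁ / 4) * (lam ^ p + D ^ p) := by gcongr
          _ = _ := by ring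
      rw [hK₀]
      linarith)
    (by
      intro x hxb _
      rw [indicator_of_mem (mem_univ x)]
      have hD0 : 0 ≤ ‖fderiv ℝ u x‖ := norm_nonneg _
      have h1 : ‖fderiv ℝ v x‖ ≤ ‖fderiv ℝ u x‖ + 8 * lam := by
        refine ContinuousLinearMap.opNorm_le_bound _ (by positivity) fun y => ?_
        rw [hvd]
        have h2 := hcx x hxb y
        have h3 := (fderiv ℝ u x).le_opNorm y
        rw [← Real.norm_eq_abs] at h2
        refine (norm_sub_le _ _).trans ?_
        linarith
      have h2 := lin_aux hp hlam0 hD0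
      have hP : 0 ≤ ‖fderiv ℝ u x‖ ^ p := by positivity
      have hl1 : 1 ≤ L₀ * C₁ := by
        rw [hL₀, add_mul, one_div_mul_cancel hC₁.ne']
        have : 0 ≤ 9 / K₀ * C₁ := by positivity
        linarith
      have hl2 : 9 ≤ L₀ * K₀ := by
        rw [hL₀, add_mul, div_mul_cancel₀ _ hK₀0.ne']
        have : 0 ≤ 1 / C₁ * K₀ := by positivity
        linarith
      calc ‖fderiv ℝ v x‖ ≤ lam ^ (1 - p) * ‖fderiv ℝ u x‖ ^ p + 9 * lam := by linarith
        _ ≤ (L₀ * C₁) * (lam ^ (1 - p) * ‖fderiv ℝ u x‖ ^ p) + (L₀ * K₀) * lam :=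
            add_le_add (le_mul_of_one_le_left (by positivity) hl1)
              (mul_le_mul_of_nonneg_right hl2 hlam0.le)
        _ = (L₀ * C₁) * (lam ^ (1 - p) * ‖fderiv ℝ u x‖ ^ p) +
              (L₀ * K₀) * (lam ^ (1 - p) * lam ^ p) := by rw [hll]
        _ = _ := by ring)
  simp only [inter_univ] at hen
  set μ : ℝ → ℝ := fun k => volume.real (ball z (ρ / 2) ∩ {x | k < v x}) with hμ
  have fin : ∀ t : Set (Euc n), t ⊆ ball z (ρ / 2) → volume t ≠ ∞ := fun t hs =>
    ((measure_mono hs).trans_lt measure_ball_lt_top).ne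
  have hμa : Antitone μ := by
    intro k l hkl
    refine measureReal_mono ?_ (fin _ inter_subset_left)
    rintro x ⟨h1, h2⟩
    exact ⟨h1, lt_of_le_of_lt hkl h2⟩
  have hΛ : Cs * (4 * (L₀ * lam ^ (1 - p)) * (K₀ * lam ^ p) * (2 * δ)) =
      8 * Cs * L₀ * K₀ * (lam * δ) := by
    calc _ = 8 * Cs * L₀ * K₀ * ((lam ^ (1 - p) * lam ^ p) * δ) := by ring
      _ = _ := by rw [hll]
  obtain ⟨h₀, hh₀⟩ : ∃ h₀, h₀ = m₁ - β * δ / 2 := ⟨_, rfl⟩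
  have hβδ : 0 < β * δ := by positivity
  have hlow : (c₃ * ρ) ^ n < μ h₀ := by
    by_contra hcon
    push Not at hcon
    have hzero : μ (h₀ + β * δ / 4) = 0 := by
      refine degiorgi_seq hn μ (fun k => measureReal_nonneg) hμa (d := β * δ / 4)
        (Λ := 8 * Cs * L₀ * K₀ * (lam * δ)) (by positivity) (by positivity) ?_ ?_
      · intro k l hk hkl
        have h1 := (hen k l (by linarith) hkl).2
        rw [hΛ] at h1
        exact h1
      · refine hcon.trans_eq ?_
        rw [hc₃, hlam]; congr 1; field_simp
    have hopen : IsOpen (ball z (ρ / 2) ∩ {x | h₀ + β * δ / 4 < v x}) :=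
      isOpen_ball.inter (isOpen_lt continuous_const hvc)
    have hempty : ball z (ρ / 2) ∩ {x | h₀ + β * δ / 4 < v x} = ∅ := by
      rw [← hopen.measure_eq_zero_iff volume]
      exact (measureReal_eq_zero_iff (fin _ inter_subset_left)).1 hzero
    have hzin : z ∈ ball z (ρ / 2) ∩ {x | h₀ + β * δ / 4 < v x} := by
      refine ⟨mem_ball_self (by positivity), ?_⟩
      show h₀ + β * δ / 4 < v z
      simp only [hv, sub_self, norm_zero]
      norm_num
      linarith
    rw [hempty] at hzin
    exact hzin
  have hE := (hen k₀ h₀ le_rfl (by linarith)).1 (q₀ * g₀) (by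
      filter_upwards [hqq] with x hx hxb hxk
      have h1 := hgg (u x) (lt_of_le_of_lt hk₀β (hxk.trans_le (hvu x)))
        (hcb x (ball_subset_closedBall hxb))
      calc q₀ * g₀ ≤ q x * g₀ := mul_le_mul_of_nonneg_right (hx hxb) hg₀0
        _ ≤ q x * g (u x) := mul_le_mul_of_nonneg_left h1 (hq0 x)) hqg.le
  have hvol : volume.real (ball z (ρ / 2) ∩ {x | k₀ < v x}) ≤ ρ ^ n * ω := by
    calc _ ≤ volume.real (ball z ρ) := measureReal_mono
            (inter_subset_left.trans (ball_subset_ball (by linarith))) measure_ball_lt_top.ne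
      _ = ρ ^ n * ω := by
        rw [measureReal_def, Measure.addHaar_ball_of_pos _ _ hρ0, ENNReal.toReal_mul,
          ENNReal.toReal_ofReal (by positivity), finrank_euclideanSpace_fin, hω, measureReal_def]
  have hfin : q₀ * g₀ * (β * δ / 2) ^ 2 * (c₃ * ρ) ^ n ≤ K₀ * lam ^ p * (2 * δ) * (ρ ^ n * ω) := by
    have e1 : h₀ - k₀ = β * δ / 2 := by rw [hh₀, hk₀]; ring
    rw [e1] at hE
    calc _ ≤ q₀ * g₀ * (β * δ / 2) ^ 2 * μ h₀ := by gcongr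
      _ ≤ _ := hE
      _ ≤ _ := by gcongr
  have e2 : lam ^ p = δ ^ (p - 1) * δ / ρ ^ p := by
    rw [hlam, Real.div_rpow hδ0.le hρ0.le, Real.rpow_sub_one hδ0.ne']
    field_simp
  rw [e2, mul_pow] at hfin
  have hρp : 0 < ρ ^ p := by positivity
  have hρn : 0 < ρ ^ n := by positivity
  have hX : 0 < δ ^ (p - 1) := by positivity
  have h9 : (δ ^ 2 * ρ ^ n / ρ ^ p) * (q₀ * g₀ * β ^ 2 / 4 * c₃ ^ n * ρ ^ p) ≤
      (δ ^ 2 * ρ ^ n / ρ ^ p) * (2 * K₀ * ω * δ ^ (p - 1)) := by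
    refine le_trans (le_of_eq ?_) (hfin.trans (le_of_eq ?_))
    · field_simp; ring
    · field_simp
  have h10 := le_of_mul_le_mul_left h9 (by positivity)
  have h11 : β ^ 2 * c₃ ^ n / (8 * K₀ * ω) * ρ ^ p * q₀ * g₀ =
      (q₀ * g₀ * β ^ 2 / 4 * c₃ ^ n * ρ ^ p) / (2 * K₀ * ω) := by
    rw [div_mul_eq_mul_div, div_mul_eq_mul_div, div_mul_eq_mul_div, div_eq_div_iff (by positivity) (by positivity)]
    ring
  rw [h11, div_le_iff₀ (by positivity)]
  linarith
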